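/- arXiv:2501.10112 — 10 statements merged into one kernel-verified Lean document; each statement's English description precedes it below -/
import Mathlib

section
/- For every n ≥ 1, the complement of the path graph P_{2n} on 2n vertices is word-representable. -/
/-- Two distinct letters `x` and `y` alternate in the word `w` if, after deleting all
letters other than `x` and `y`, no two consecutive letters of the remaining word are equal. -/
def Alternate {V : Type*} [DecidableEq V] (w : List V) (x y : V) : Prop :=
  (w.filter fun z => decide (z = x ∨ z = y)).Chain' (· ≠ ·)

/-- A word `w` represents the simple graph `G` if every vertex occurs in `w` at least once
and two distinct vertices alternate in `w` exactly when they are adjacent in `G`. -/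
def Represents {V : Type*} [DecidableEq V] (G : SimpleGraph V) (w : List V) : Prop :=
  (∀ v : V, v ∈ w) ∧ ∀ x y : V, x ≠ y → (Alternate w x y ↔ G.Adj x y)

/-- A simple graph is word-representable if some word represents it. -/
def WordRepresentable {V : Type*} [DecidableEq V] (G : SimpleGraph V) : Prop :=
  ∃ w : List V, Represents G w

/-- The path graph on `n` vertices: `i` and `j` are adjacent iff `|i - j| = 1`. -/
def pathGraph (n : ℕ) : SimpleGraph (Fin n) :=
  SimpleGraph.fromRel fun i j => (i : ℕ) + 1 = (j : ℕ)

theorem exists_sorted_list {m : ℕ} (f : Fin m → ℕ) (hf : Function.Injective f) :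
    ∃ l : List (Fin m), (∀ v, v ∈ l) ∧ l.Pairwise (fun a b => f a < f b) := by
  let r : Fin m → Fin m → Prop := fun a b => f a ≤ f b
  have : DecidableRel r := fun a b => inferInstanceAs (Decidable (f a ≤ f b))
  have : Std.Total r := ⟨fun a b => le_total (f a) (f b)⟩
  have : IsTrans (Fin m) r := ⟨fun a b c h1 h2 => le_trans (α := ℕ) h1 h2⟩
  refine ⟨(List.finRange m).insertionSort r, fun v => by simp, ?_⟩
  have h1 : ((List.finRange m).insertionSort r).Pairwise r := List.pairwise_insertionSort r _
  have h2 : ((List.finRange m).insertionSort r).Nodup :=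
    (List.perm_insertionSort r _).nodup_iff.mpr (List.nodup_finRange m)
  exact (h1.and h2).imp fun {a b} h => lt_of_le_of_ne h.1 fun e => h.2 (hf e)

theorem filter_pair {V : Type*} [DecidableEq V] (f : V → ℕ) (l : List V)
    (hl : l.Pairwise (fun a b => f a < f b)) (x y : V) (hx : x ∈ l) (hy : y ∈ l)
    (hxy : f x < f y) : (l.filter fun z => decide (z = x ∨ z = y)) = [x, y] := by
  have hne : x ≠ y := by rintro rfl; exact lt_irrefl _ hxy
  have hnd : l.Nodup := hl.imp fun {a b} h e => by subst e; exact lt_irrefl _ h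
  refine List.Perm.eq_of_pairwise (le := fun a b => f a < f b) ?_ (hl.filter _) (by simpa using hxy) ?_
  · intro a b _ _ h1 h2
    exact absurd h1 (lt_asymm h2)
  · rw [List.perm_ext_iff_of_nodup (hnd.filter _) (by simpa using hne)]
    intro a
    simp only [List.mem_filter, decide_eq_true_eq, List.mem_cons, List.not_mem_nil, or_false]
    constructor
    · exact fun h => h.2
    · rintro (rfl | rfl) <;> simp [*]

theorem alternate_comm {V : Type*} [DecidableEq V] (w : List V) (x y : V) :
    Alternate w x y ↔ Alternate w y x := by
  unfold Alternate
  simp only [or_comm]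

theorem alternate_append {V : Type*} [DecidableEq V] (f g : V → ℕ) (l k : List V)
    (hl : l.Pairwise (fun a b => f a < f b)) (hk : k.Pairwise (fun a b => g a < g b))
    (x y : V) (hx : x ∈ l) (hy : y ∈ l) (hx' : x ∈ k) (hy' : y ∈ k)
    (hxy : f x < f y) (hg : g x ≠ g y) : Alternate (l ++ k) x y ↔ g x < g y := by
  have hne : x ≠ y := by rintro rfl; exact lt_irrefl _ hxy
  unfold Alternate
  rw [List.filter_append, filter_pair f l hl x y hx hy hxy]
  rcases lt_or_gt_of_ne hg with h | h
  · rw [filter_pair g k hk x y hx' hy' h]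
    simp [List.Chain', h, hne, hne.symm]
  · have := filter_pair g k hk y x hy' hx' h
    simp only [or_comm (a := _ = y)] at this
    rw [this]
    simp [List.Chain', h.le]

/-- The complement of the path graph `P_{2n}` on `2n` vertices is word-representable. -/
theorem complement_pathGraph_even_wordRepresentable :
    ∀ n : ℕ, 1 ≤ n → WordRepresentable (pathGraph (2 * n))ᶜ := by
  intro n _
  let f : Fin (2 * n) → ℕ := fun i => if i.val % 2 = 0 then i.val + 1 else i.val - 1
  let g : Fin (2 * n) → ℕ := fun i => if i.val % 2 = 0 then i.val - 1 else i.val + 1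
  have hf : Function.Injective f := by
    intro a b h
    apply Fin.ext
    simp only [f] at h
    split_ifs at h <;> omega
  have hg : Function.Injective g := by
    intro a b h
    apply Fin.ext
    simp only [g] at h
    split_ifs at h <;> omega
  obtain ⟨l, hl, hl'⟩ := exists_sorted_list f hf
  obtain ⟨k, hk, hk'⟩ := exists_sorted_list g hg
  have key : ∀ x y, f x < f y → (Alternate (l ++ k) x y ↔ (pathGraph (2 * n))ᶜ.Adj x y) := by
    intro x y h
    have hne : x ≠ y := by rintro rfl; exact lt_irrefl _ h
    have hv : x.val ≠ y.val := fun e => hne (Fin.ext e)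
    rw [alternate_append f g l k hl' hk' x y (hl x) (hl y) (hk x) (hk y) h (hg.ne hne)]
    simp only [SimpleGraph.compl_adj, pathGraph, SimpleGraph.fromRel_adj, f, g, ne_eq, hne,
      not_false_eq_true, true_and] at h ⊢
    split_ifs at h ⊢ <;> omega
  refine ⟨l ++ k, fun v => by simp [hl v], fun x y hne => ?_⟩
  rcases lt_or_gt_of_ne (hf.ne hne) with h | h
  · exact key x y h
  · rw [alternate_comm, SimpleGraph.adj_comm]
    exact key y x h
end

section
/- For every n ≥ 1, the complement of the path graph P_{2n-1} on 2n-1 vertices is word-representable. -/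
/-- For an injective key, the vertices can be listed so that restricting to two letters
gives them in the order of their keys. -/
lemma exists_sorted_word {N : ℕ} (f : Fin N → ℕ) (hf : Function.Injective f) :
    ∃ L : List (Fin N), (∀ v, v ∈ L) ∧ ∀ x y : Fin N, f x < f y →
      L.filter (fun z => decide (z = x ∨ z = y)) = [x, y] := by
  let r : Fin N → Fin N → Prop := fun a b => f a ≤ f b
  haveI : DecidableRel r := fun a b => inferInstanceAs (Decidable (f a ≤ f b))
  have : IsTrans (Fin N) r := ⟨fun a b c h1 h2 => le_trans (α := ℕ) h1 h2⟩
  have : Std.Total r := ⟨fun a b => le_total (f a) (f b)⟩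
  have hp := List.perm_insertionSort r (List.finRange N)
  have hs := List.pairwise_insertionSort r (List.finRange N)
  refine ⟨(List.finRange N).insertionSort r, fun v => hp.mem_iff.2 (List.mem_finRange v), ?_⟩
  intro x y hxy
  have hne : x ≠ y := by rintro rfl; omega
  have hnd : ((List.finRange N).insertionSort r).Nodup :=
    hp.nodup_iff.2 (List.nodup_finRange N)
  have hperm : (((List.finRange N).insertionSort r).filter
      (fun z => decide (z = x ∨ z = y))).Perm [x, y] := by
    rw [List.perm_ext_iff_of_nodup (hnd.filter _) (by simp [hne])]
    intro a
    have := hp.mem_iff.2 (List.mem_finRange a)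
    simp only [List.mem_filter, this, true_and]
    simp
  refine hperm.eq_of_pairwise (le := r) ?_ (hs.filter _) ?_
  · intro a b _ _ h1 h2
    exact hf (le_antisymm h1 h2)
  · simpa [r] using hxy.le

/-- The complement of the path graph `P_{2n-1}` on `2n-1` vertices is word-representable. -/
theorem complement_pathGraph_odd_wordRepresentable :
    ∀ n : ℕ, 1 ≤ n → WordRepresentable (pathGraph (2 * n - 1))ᶜ := by
  intro n _
  generalize 2 * n - 1 = N
  let f : Fin N → ℕ := fun i => if i.val % 2 = 0 then i.val + 1 else i.val - 1
  let g : Fin N → ℕ := fun i => if i.val % 2 = 0 then i.val - 1 else i.val + 1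
  have hf : Function.Injective f := by
    intro a b h
    simp only [f] at h
    apply Fin.ext
    split_ifs at h <;> omega
  have hg : Function.Injective g := by
    intro a b h
    simp only [g] at h
    apply Fin.ext
    split_ifs at h <;> omega
  obtain ⟨L, hL, hLf⟩ := exists_sorted_word f hf
  obtain ⟨M, hM, hMg⟩ := exists_sorted_word g hg
  refine ⟨L ++ M, fun v => List.mem_append_left _ (hL v), ?_⟩
  -- it suffices to treat pairs in increasing order
  have key : ∀ x y : Fin N, x.val < y.val →
      (Alternate (L ++ M) x y ↔ (pathGraph N)ᶜ.Adj x y) := by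
    intro x y hxy
    have hne : x ≠ y := by rintro rfl; omega
    have hsw : (fun z => decide (z = x ∨ z = y)) = (fun z => decide (z = y ∨ z = x)) := by
      funext z; simp [or_comm]
    have hadj : (pathGraph N)ᶜ.Adj x y ↔ ¬ (x.val + 1 = y.val) := by
      simp only [SimpleGraph.compl_adj, pathGraph, SimpleGraph.fromRel_adj]
      constructor
      · rintro ⟨_, h⟩ h2
        exact h ⟨hne, Or.inl h2⟩
      · intro h
        refine ⟨hne, ?_⟩
        rintro ⟨_, h2 | h2⟩ <;> omega
    rw [hadj, Alternate, List.filter_append]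
    rcases lt_or_gt_of_ne (hf.ne hne) with h1 | h1 <;>
    rcases lt_or_gt_of_ne (hg.ne hne) with h2 | h2
    · rw [hLf x y h1, hMg x y h2]
      have : ¬ (x.val + 1 = y.val) := by
        simp only [f, g] at h1 h2
        split_ifs at h1 h2 <;> omega
      simp [List.Chain', this, hne, hne.symm]
    · rw [hLf x y h1, hsw, hMg y x h2]
      have : x.val + 1 = y.val := by
        simp only [f, g] at h1 h2
        split_ifs at h1 h2 <;> omega
      simp [List.Chain', this]
    · rw [hMg x y h2, hsw, hLf y x h1]
      have : x.val + 1 = y.val := by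
        simp only [f, g] at h1 h2
        split_ifs at h1 h2 <;> omega
      simp [List.Chain', this]
    · exfalso
      simp only [f, g] at h1 h2
      split_ifs at h1 h2 <;> omega
  intro x y hne
  rcases lt_or_gt_of_ne (fun h => hne (Fin.ext h) : x.val ≠ y.val) with h | h
  · exact key x y h
  · have := key y x h
    rw [SimpleGraph.adj_comm, ← this]
    simp only [Alternate, or_comm]
end

section
/- For every n ≥ 1, the complement of the path graph P_{2n} on 2n vertices is a comparability graph. -/
/-- A simple graph is a comparability graph if there is a strict partial order on its
vertices such that two distinct vertices are adjacent iff they are comparable. -/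
def IsComparabilityGraph {V : Type*} (G : SimpleGraph V) : Prop :=
  ∃ r : V → V → Prop, IsStrictOrder V r ∧ ∀ x y : V, G.Adj x y ↔ (r x y ∨ r y x)

/-- The complement of the path graph `P_{2n}` on `2n` vertices is a comparability graph. -/
theorem complement_pathGraph_even_comparability :
    ∀ n : ℕ, 1 ≤ n → IsComparabilityGraph (pathGraph (2 * n))ᶜ := by
  intro n _
  refine ⟨fun i j => (i : ℕ) + 1 < (j : ℕ), ?_, ?_⟩
  · exact { irrefl := fun a h => by omega, trans := fun a b c h1 h2 => by omega }
  · intro x y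
    simp only [pathGraph, SimpleGraph.compl_adj, SimpleGraph.fromRel_adj, ne_eq, Fin.ext_iff]
    omega
end

section
/- For all n ≥ 1 and 0 ≤ k ≤ n-1, the complement of the generalized crown graph S_{n-k}^k can be represented by a 3-uniform word, i.e., there is a word over its vertex set in which every vertex occurs exactly three times that represents the graph. -/
/-- The generalized crown graph `S_{n-k}^k`: a bipartite graph on vertex set
`{x_1, …, x_n} ∪ {y_1, …, y_n}` (encoded as `Fin n ⊕ Fin n`) in which `x i` and `y j` are
adjacent iff `j` is not congruent to any of `i, i+1, …, i+k` modulo `n`. -/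
def genCrownGraph (n k : ℕ) : SimpleGraph (Fin n ⊕ Fin n) :=
  SimpleGraph.fromRel fun u v =>
    match u, v with
    | Sum.inl i, Sum.inr j => ∀ l : ℕ, l ≤ k → ¬ ((j : ℕ) ≡ (i : ℕ) + l [MOD n])
    | _, _ => False

/-- Occurrence comparison by key. -/
def occLe {V : Type*} (key : V × Fin 3 → ℕ) (a b : V × Fin 3) : Bool := decide (key a ≤ key b)

theorem exists_word {V : Type*} [DecidableEq V] [Fintype V] (key : V × Fin 3 → ℕ)
    (hinj : Function.Injective key)
    (h01 : ∀ v, key (v, 0) < key (v, 1)) (h12 : ∀ v, key (v, 1) < key (v, 2)) :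
    ∃ w : List V, (∀ v, v ∈ w) ∧ (∀ v, w.count v = 3) ∧ ∀ x y, x ≠ y → (Alternate w x y ↔
      ((key (x, 0) < key (y, 0) ∧ key (y, 0) < key (x, 1) ∧ key (x, 1) < key (y, 1) ∧
          key (y, 1) < key (x, 2) ∧ key (x, 2) < key (y, 2)) ∨
        (key (y, 0) < key (x, 0) ∧ key (x, 0) < key (y, 1) ∧ key (y, 1) < key (x, 1) ∧
          key (x, 1) < key (y, 2) ∧ key (y, 2) < key (x, 2)))) := by
  have htrans : ∀ a b c, occLe key a b = true → occLe key b c = true → occLe key a c = true := by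
    intro a b c; simp only [occLe, decide_eq_true_eq]; omega
  have htot : ∀ a b, (occLe key a b || occLe key b a) = true := by
    intro a b; simp only [occLe, Bool.or_eq_true, decide_eq_true_eq]; omega
  set s : List (V × Fin 3) := (Finset.univ : Finset (V × Fin 3)).toList.mergeSort (occLe key) with hs
  have hsorted : s.Pairwise (fun a b => occLe key a b = true) :=
    List.pairwise_mergeSort htrans htot _
  have hperm : s.Perm (Finset.univ : Finset (V × Fin 3)).toList := List.mergeSort_perm _ _
  have hnd : s.Nodup := hperm.nodup_iff.2 (Finset.nodup_toList _)
  have hmem : ∀ a, a ∈ s := fun a => hperm.mem_iff.2 (by simp)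
  refine ⟨s.map Prod.fst, fun v => List.mem_map.2 ⟨(v, 0), hmem _, rfl⟩, ?_, ?_⟩
  · intro v
    have hp : (s.filter (fun a => a.1 == v)).Perm [(v, 0), (v, 1), (v, 2)] := by
      rw [List.perm_ext_iff_of_nodup (hnd.filter _) (by simp)]
      rintro ⟨u, t⟩
      fin_cases t <;> simp [hmem]
    have := hp.length_eq
    rw [List.count, List.countP_map, List.countP_eq_length_filter]
    exact this
  · intro x y hxy
    have hf : s.filter (fun a => decide (a.1 = x ∨ a.1 = y)) =
        List.merge [(x, 0), (x, 1), (x, 2)] [(y, 0), (y, 1), (y, 2)] (occLe key) := by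
      refine List.Perm.eq_of_pairwise (le := fun a b => occLe key a b = true) ?_
        (hsorted.filter _) (List.pairwise_merge htrans htot _ _ ?_ ?_) ?_
      · intro a b _ _; simp only [occLe, decide_eq_true_eq]
        intro h1 h2; exact hinj (le_antisymm h1 h2)
      · have := h01 x; have := h12 x
        simp [occLe]; omega
      · have := h01 y; have := h12 y
        simp [occLe]; omega
      · refine List.Perm.trans ?_ (List.merge_perm_append _).symm
        rw [List.perm_ext_iff_of_nodup (hnd.filter _) (by simp [hxy])]
        rintro ⟨u, t⟩
        fin_cases t <;> simp [hmem]
    have hyx := Ne.symm hxy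
    have h1 := h01 x
    have h2 := h12 x
    have h3 := h01 y
    have h4 := h12 y
    have hne : ∀ a b, key (x, a) ≠ key (y, b) := by
      intro a b h
      have := hinj h
      simp [hxy] at this
    have e00 := hne 0 0
    have e01 := hne 0 1
    have e02 := hne 0 2
    have e10 := hne 1 0
    have e11 := hne 1 1
    have e12 := hne 1 2
    have e20 := hne 2 0
    have e21 := hne 2 1
    have e22 := hne 2 2
    unfold Alternate
    change List.IsChain _ _ ↔ _
    rw [List.filter_map]
    have hc : ((fun z => decide (z = x ∨ z = y)) ∘ Prod.fst : V × Fin 3 → Bool) =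
      (fun a => decide (a.1 = x ∨ a.1 = y)) := rfl
    rw [hc, hf]
    simp only [List.cons_merge_cons, List.nil_merge, List.merge_right, occLe, decide_eq_true_eq]
    split_ifs <;> simp [hxy, hyx, -not_and, -not_or] <;> omega

/-- Position keys for the word representing the complement of the crown graph. -/
def crownKey (n k : ℕ) : (Fin n ⊕ Fin n) × Fin 3 → ℕ
  | (Sum.inl i, 0) => 2 * i
  | (Sum.inl i, 1) => if i + k < n then 2 * n + i else 8 * n + 2 * (i + k) + 1
  | (Sum.inl i, 2) => 10 * n + 2 * (i + k) + 1
  | (Sum.inr j, 0) => 2 * j + 1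
  | (Sum.inr j, 1) => 10 * n + 2 * j
  | (Sum.inr j, 2) => 12 * n + 2 * j

theorem crown_mod (n k i j : ℕ) (hi : i < n) (hj : j < n) (hk : k < n) :
    (∃ l, l ≤ k ∧ j ≡ i + l [MOD n]) ↔ (i ≤ j ∧ j ≤ i + k) ∨ j + n ≤ i + k := by
  constructor
  · rintro ⟨l, hl, h⟩
    unfold Nat.ModEq at h
    rw [Nat.mod_eq_of_lt hj] at h
    by_cases hc : i + l < n
    · rw [Nat.mod_eq_of_lt hc] at h; omega
    · rw [Nat.mod_eq_sub_mod (by omega), Nat.mod_eq_of_lt (by omega)] at h; omega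
  · rintro (⟨h1, h2⟩ | h)
    · exact ⟨j - i, by omega, by rw [Nat.add_sub_cancel' h1]⟩
    · refine ⟨j + n - i, by omega, ?_⟩
      rw [Nat.add_sub_cancel' (by omega)]
      simp [Nat.ModEq]

theorem crownKey_injective (n k : ℕ) (hk : k < n) : Function.Injective (crownKey n k) := by
  rintro ⟨u | u, s⟩ ⟨v | v, t⟩ h <;> fin_cases s <;> fin_cases t <;>
    simp only [crownKey, Fin.zero_eta, Fin.mk_one, Fin.reduceFinMk] at h <;>
    (have hu := u.isLt; have hv := v.isLt; try split_ifs at h) <;>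
    first
      | (exfalso; omega)
      | (have : u = v := Fin.ext (by omega)
         rw [this])

theorem complement_genCrownGraph_three_uniform :
    ∀ n k : ℕ, 1 ≤ n → k ≤ n - 1 → ∃ w : List (Fin n ⊕ Fin n),
      Represents (genCrownGraph n k)ᶜ w ∧ ∀ v : Fin n ⊕ Fin n, w.count v = 3 := by
  intro n k hn hk'
  have hk : k < n := by omega
  obtain ⟨w, hwm, hw3, hw⟩ := exists_word (crownKey n k) (crownKey_injective n k hk)
    (by
      rintro (i | i) <;> have hi := i.isLt <;> simp only [crownKey] <;> try split_ifs
      all_goals omega)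
    (by
      rintro (i | i) <;> have hi := i.isLt <;> simp only [crownKey] <;> try split_ifs
      all_goals omega)
  refine ⟨w, ⟨fun v => ?_, ?_⟩, ?_⟩
  rotate_left 2
  · intro v
    have hb : (Sum.instBEq : BEq (Fin n ⊕ Fin n)) = instBEqOfDecidableEq := by
      ext a b
      rcases a with a | a <;> rcases b with b | b
      · change (a == b) = decide (Sum.inl a = Sum.inl b)
        rw [Bool.eq_iff_iff]; simp
      · change false = decide (Sum.inl a = Sum.inr b)
        simp
      · change false = decide (Sum.inr a = Sum.inl b)
        simp
      · change (a == b) = decide (Sum.inr a = Sum.inr b)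
        rw [Bool.eq_iff_iff]; simp
    rw [hb]
    exact hw3 v
  · exact hwm v
  · intro x y hxy
    rw [hw x y hxy]
    have hmod : ∀ i j : Fin n, ¬ (∀ l : ℕ, l ≤ k → ¬ ((j : ℕ) ≡ (i : ℕ) + l [MOD n])) ↔
        ((i : ℕ) ≤ j ∧ (j : ℕ) ≤ i + k) ∨ (j : ℕ) + n ≤ i + k := by
      intro i j
      rw [← crown_mod n k i j i.isLt j.isLt hk]
      push Not
      rfl
    rcases x with i | i <;> rcases y with j | j <;> have hi := i.isLt <;> have hj := j.isLt
    · have hne : (i : ℕ) ≠ j := fun h => hxy (by rw [Fin.ext h])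
      have : (genCrownGraph n k)ᶜ.Adj (Sum.inl i) (Sum.inl j) := by
        simp [genCrownGraph, SimpleGraph.compl_adj]
        exact fun h => hne (by rw [h])
      simp only [this, iff_true, crownKey]
      split_ifs <;> omega
    · have : (genCrownGraph n k)ᶜ.Adj (Sum.inl i) (Sum.inr j) ↔
          ¬ (∀ l : ℕ, l ≤ k → ¬ ((j : ℕ) ≡ (i : ℕ) + l [MOD n])) := by
        simp [genCrownGraph, SimpleGraph.compl_adj]
      rw [this, hmod]
      simp only [crownKey]
      split_ifs <;> omega
    · have : (genCrownGraph n k)ᶜ.Adj (Sum.inr i) (Sum.inl j) ↔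
          ¬ (∀ l : ℕ, l ≤ k → ¬ ((i : ℕ) ≡ (j : ℕ) + l [MOD n])) := by
        simp [genCrownGraph, SimpleGraph.compl_adj]
      rw [this, hmod]
      simp only [crownKey]
      split_ifs <;> omega
    · have hne : (i : ℕ) ≠ j := fun h => hxy (by rw [Fin.ext h])
      have : (genCrownGraph n k)ᶜ.Adj (Sum.inr i) (Sum.inr j) := by
        simp [genCrownGraph, SimpleGraph.compl_adj]
        exact fun h => hne (by rw [h])
      simp only [this, iff_true, crownKey]
      omega
end

section
/- For every n ≥ 3, the complement of the crown graph H_{n,n} is not a comparability graph. -/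
/-- The crown graph `H_{n,n}`: a bipartite graph on vertex set
`{x_1, …, x_n} ∪ {y_1, …, y_n}` (encoded as `Fin n ⊕ Fin n`) in which `x i` and `y j`
are adjacent iff `i ≠ j`. -/
def crownGraph (n : ℕ) : SimpleGraph (Fin n ⊕ Fin n) :=
  SimpleGraph.fromRel fun u v =>
    match u, v with
    | Sum.inl i, Sum.inr j => i ≠ j
    | _, _ => False

/-- For every `n ≥ 3`, the complement of the crown graph `H_{n,n}` is not a
comparability graph. -/
theorem complement_crownGraph_not_comparability :
    ∀ n : ℕ, 3 ≤ n → ¬ IsComparabilityGraph (crownGraph n)ᶜ := by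
  rintro n hn ⟨r, hr, h⟩
  have irr : ∀ a, ¬ r a a := hr.irrefl
  have tr : ∀ a b c, r a b → r b c → r a c := hr.trans
  have hxx : ∀ i j : Fin n, i ≠ j → r (Sum.inl i) (Sum.inl j) ∨ r (Sum.inl j) (Sum.inl i) := by
    intro i j hij
    rw [← h]
    simp [crownGraph, hij]
  have hxy : ∀ i : Fin n, r (Sum.inl i) (Sum.inr i) ∨ r (Sum.inr i) (Sum.inl i) := by
    intro i
    rw [← h]
    simp [crownGraph]
  have hnon : ∀ i j : Fin n, i ≠ j → ¬ (r (Sum.inl i) (Sum.inr j) ∨ r (Sum.inr j) (Sum.inl i)) := by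
    intro i j hij
    rw [← h]
    simp [crownGraph, hij]
  -- if `x i < y i` then `x i` is below every other `x j`
  have up : ∀ i j : Fin n, i ≠ j → r (Sum.inl i) (Sum.inr i) → r (Sum.inl i) (Sum.inl j) := by
    intro i j hij hi
    rcases hxx i j hij with h1 | h1
    · exact h1
    · exact absurd (Or.inl (tr _ _ _ h1 hi)) (hnon j i hij.symm)
  -- if `y i < x i` then `x i` is above every other `x j`
  have down : ∀ i j : Fin n, i ≠ j → r (Sum.inr i) (Sum.inl i) → r (Sum.inl j) (Sum.inl i) := by
    intro i j hij hi
    rcases hxx i j hij with h1 | h1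
    · exact absurd (Or.inr (tr _ _ _ hi h1)) (hnon j i hij.symm)
    · exact h1
  have noup : ∀ i j : Fin n, i ≠ j → r (Sum.inl i) (Sum.inr i) → r (Sum.inl j) (Sum.inr j) → False :=
    fun i j hij hi hj => irr _ (tr _ _ _ (up i j hij hi) (up j i hij.symm hj))
  have nodown : ∀ i j : Fin n, i ≠ j → r (Sum.inr i) (Sum.inl i) → r (Sum.inr j) (Sum.inl j) → False :=
    fun i j hij hi hj => irr _ (tr _ _ _ (down i j hij hi) (down j i hij.symm hj))
  have h01 : (⟨0, by omega⟩ : Fin n) ≠ ⟨1, by omega⟩ := by simp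
  have h02 : (⟨0, by omega⟩ : Fin n) ≠ ⟨2, by omega⟩ := by simp
  have h12 : (⟨1, by omega⟩ : Fin n) ≠ ⟨2, by omega⟩ := by simp
  rcases hxy ⟨0, by omega⟩ with a | a <;> rcases hxy ⟨1, by omega⟩ with b | b <;>
    rcases hxy ⟨2, by omega⟩ with c | c <;>
    first
    | exact noup _ _ h01 a b
    | exact noup _ _ h02 a c
    | exact noup _ _ h12 b c
    | exact nodown _ _ h01 a b
    | exact nodown _ _ h02 a c
    | exact nodown _ _ h12 b c
end

section
/- For every n ≥ 3, the graph obtained from the complement of the crown graph H_{n,n} by adding one new vertex adjacent to all other vertices (equivalently, the complement of the graph G_1 obtained from H_{n,n} by adding an isolated vertex) is not word-representable. -/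
/-- The graph `G_1`: the crown graph `H_{n,n}` (on vertex set `Fin n ⊕ Fin n`, where
`x i` and `y j` are adjacent iff `i ≠ j`) together with one added isolated vertex
(encoded as `none` in the `Option` type). -/
def crownPlusIsolated (n : ℕ) : SimpleGraph (Option (Fin n ⊕ Fin n)) :=
  SimpleGraph.fromRel fun u v =>
    match u, v with
    | some (Sum.inl i), some (Sum.inr j) => i ≠ j
    | _, _ => False

/-- Along every prefix of `w`, the letter `x` occurs as often as `y`, or once more. -/
def Leads {V : Type*} [DecidableEq V] (w : List V) (x y : V) : Prop :=
  ∀ u : List V, u <+: w → u.count y ≤ u.count x ∧ u.count x ≤ u.count y + 1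

theorem leads_cons {V : Type*} [DecidableEq V] (a : V) (w : List V) (x y : V) :
    Leads (a :: w) x y ↔ ∀ u : List V, u <+: w →
      (a :: u).count y ≤ (a :: u).count x ∧ (a :: u).count x ≤ (a :: u).count y + 1 := by
  constructor
  · intro h u hu
    exact h _ (by simpa using hu)
  · intro h u hu
    rcases List.prefix_cons_iff.1 hu with rfl | ⟨t, rfl, ht⟩
    · simp
    · exact h t ht

theorem leads_iff {V : Type*} [DecidableEq V] (w : List V) : ∀ (x y : V), x ≠ y →
    (Leads w x y ↔
      (y :: w.filter fun z => decide (z = x ∨ z = y)).IsChain (· ≠ ·)) := by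
  induction w with
  | nil => intro x y _; simp [Leads]
  | cons a w ih =>
    intro x y hxy
    rw [leads_cons]
    by_cases hx : a = x
    · subst hx
      have h2 := ih y a hxy.symm
      have e : (fun z => decide (z = y ∨ z = a)) = (fun z => decide (z = a ∨ z = y)) := by
        funext z; simp [or_comm]
      rw [e] at h2
      simp only [List.filter_cons, true_or, decide_true, if_true, List.isChain_cons_cons]
      rw [← h2]
      simp only [List.count_cons_self, List.count_cons_of_ne hxy, ne_eq, hxy.symm,
        not_false_eq_true, true_and, Leads]
      constructor <;> intro h u hu <;> have := h u hu <;> omega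
    · by_cases hy : a = y
      · subst hy
        simp only [List.filter_cons, or_true, decide_true, if_true, List.isChain_cons_cons]
        constructor
        · intro h
          have := h [] List.nil_prefix
          simp [hx] at this
        · intro h; exact absurd rfl h.1
      · have h2 := ih x y hxy
        simp only [List.filter_cons, hx, hy, or_self, decide_false]
        rw [if_neg (by simp), ← h2]
        simp only [List.count_cons_of_ne hx, List.count_cons_of_ne hy, Leads]

theorem alternate_iff {V : Type*} [DecidableEq V] (w : List V) (x y : V) (hxy : x ≠ y) :
    Alternate w x y ↔ Leads w x y ∨ Leads w y x := by
  rw [leads_iff w x y hxy, leads_iff w y x hxy.symm]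
  have e : (fun z => decide (z = y ∨ z = x)) = (fun z => decide (z = x ∨ z = y)) := by
    funext z; simp [or_comm]
  rw [e]
  unfold Alternate
  change List.IsChain _ _ ↔ _
  generalize (w.filter fun z => decide (z = x ∨ z = y)) = l
  cases l with
  | nil => simp
  | cons b l =>
    simp only [List.isChain_cons_cons]
    by_cases h : y = b
    · subst h; simp [hxy]
    · simp [h]

open Classical in
/-- Occurrences of `x` in `u`, shifted by one when `x` runs ahead of the apex `z` in `w`. -/
noncomputable def shifted {V : Type*} [DecidableEq V] (w : List V) (z x : V) (u : List V) : ℤ :=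
  (u.count x : ℤ) - if Leads w x z then 1 else 0

/-- The order of letters inside the blocks cut out by the apex `z`. -/
def BlockLE {V : Type*} [DecidableEq V] (w : List V) (z x y : V) : Prop :=
  ∀ u : List V, u <+: w → shifted w z x u ≤ shifted w z y u

theorem BlockLE.tr {V : Type*} [DecidableEq V] {w : List V} {z a b c : V}
    (h : BlockLE w z a b) (h' : BlockLE w z b c) : BlockLE w z a c :=
  fun u hu => (h u hu).trans (h' u hu)

theorem alternate_iff_blockLE {V : Type*} [DecidableEq V] (w : List V) (z x y : V)
    (hxy : x ≠ y) (hx : Leads w x z ∨ Leads w z x) (hy : Leads w y z ∨ Leads w z y) :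
    Alternate w x y ↔ BlockLE w z x y ∨ BlockLE w z y x := by
  rw [alternate_iff w x y hxy]
  have n0 : ([] : List V) <+: w := List.nil_prefix
  by_cases ax : Leads w x z <;> by_cases ay : Leads w y z
  · simp only [BlockLE, shifted, ax, ay, if_true]
    rw [or_comm]
    refine or_congr ?_ ?_ <;>
    · constructor <;> intro h u hu <;> have := h u hu <;> have := ax u hu <;>
        have := ay u hu <;> omega
  · have ay' := hy.resolve_left ay
    simp only [BlockLE, shifted, ax, ay, if_true, if_false]
    constructor
    · rintro (h | h)
      · left; intro u hu; have := h u hu; omega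
      · left; intro u hu; have := h u hu; have := ax u hu; have := ay' u hu; omega
    · rintro (h | h)
      · left; intro u hu; have := h u hu; have := ax u hu; have := ay' u hu; omega
      · have := h [] n0; simp at this
  · have ax' := hx.resolve_left ax
    simp only [BlockLE, shifted, ax, ay, if_true, if_false]
    constructor
    · rintro (h | h)
      · right; intro u hu; have := h u hu; have := ay u hu; have := ax' u hu; omega
      · right; intro u hu; have := h u hu; omega
    · rintro (h | h)
      · have := h [] n0; simp at this
      · right; intro u hu; have := h u hu; have := ay u hu; have := ax' u hu; omega
  · have ax' := hx.resolve_left ax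
    have ay' := hy.resolve_left ay
    simp only [BlockLE, shifted, ax, ay, if_false]
    rw [or_comm]
    refine or_congr ?_ ?_ <;>
    · constructor <;> intro h u hu <;> have := h u hu <;> have := ax' u hu <;>
        have := ay' u hu <;> omega

/-- The triangular prism is not the comparability graph of a transitive relation. -/
theorem prism_not_comparability {V : Type*} (R : V → V → Prop)
    (tr : ∀ {a b c}, R a b → R b c → R a c) (x y : Fin 3 → V)
    (hx : ∀ i j, i ≠ j → (R (x i) (x j) ∨ R (x j) (x i)))
    (hy : ∀ i j, i ≠ j → (R (y i) (y j) ∨ R (y j) (y i)))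
    (hm : ∀ i, R (x i) (y i) ∨ R (y i) (x i))
    (hn : ∀ i j, i ≠ j → ¬ R (x i) (y j) ∧ ¬ R (y j) (x i)) : False := by
  -- the orientations of two distinct matching edges are opposite
  have up : ∀ i j, i ≠ j → R (x i) (y i) → R (y j) (x j) ∧ R (x i) (x j) := by
    intro i j hij h
    have h1 : R (x i) (x j) := (hx i j hij).resolve_right fun h' =>
      (hn j i hij.symm).1 (tr h' h)
    exact ⟨(hm j).resolve_left fun h' => (hn i j hij).1 (tr h1 h'), h1⟩
  have dn : ∀ i j, i ≠ j → R (y i) (x i) → R (x j) (y j) := by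
    intro i j hij h
    have h1 : R (y i) (y j) := (hy i j hij).resolve_right fun h' =>
      (hn i j hij).2 (tr h' h)
    exact (hm j).resolve_right fun h' => (hn j i hij.symm).2 (tr h1 h')
  have key : ∀ i j k : Fin 3, i ≠ j → i ≠ k → j ≠ k → R (x i) (y i) → False := by
    intro i j k hij hik hjk h
    have hj := (up i j hij h).1
    have hk := dn j k hjk hj
    have hi := (up k i hik.symm hk).1
    have hj' := dn i j hij hi
    have h1 : R (x i) (x j) := (up i j hij h).2
    exact (hn i j hij).1 (tr h1 hj')
  rcases hm 0 with h | h
  · exact key 0 1 2 (by decide) (by decide) (by decide) h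
  · exact key 1 0 2 (by decide) (by decide) (by decide) (dn 0 1 (by decide) h)

/-- For every `n ≥ 3`, the complement of the graph `G_1` obtained from the crown graph
`H_{n,n}` by adding an isolated vertex (equivalently, the complement of `H_{n,n}` with an
all-adjacent vertex added) is not word-representable. -/
theorem complement_crownPlusIsolated_not_wordRepresentable :
    ∀ n : ℕ, 3 ≤ n → ¬ WordRepresentable (crownPlusIsolated n)ᶜ := by
  rintro n hn ⟨w, -, hw⟩
  have hz : ∀ v : Fin n ⊕ Fin n, Leads w (some v) none ∨ Leads w none (some v) := by
    intro v
    rw [← alternate_iff w (some v) none (by simp), hw _ _ (by simp)]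
    simp [crownPlusIsolated]
  have key : ∀ v v' : Fin n ⊕ Fin n, v ≠ v' →
      ((BlockLE w none (some v) (some v') ∨ BlockLE w none (some v') (some v)) ↔
        (crownPlusIsolated n)ᶜ.Adj (some v) (some v')) := by
    intro v v' h
    have h' : (some v) ≠ (some v') := by simpa using h
    rw [← alternate_iff_blockLE w none _ _ h' (hz v) (hz v'), hw _ _ h']
  let c : Fin 3 → Fin n := Fin.castLE hn
  have hc : ∀ i j, i ≠ j → c i ≠ c j := fun i j h h' => h (Fin.castLE_injective hn h')
  refine prism_not_comparability (BlockLE w none) BlockLE.tr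
    (fun i => some (Sum.inl (c i))) (fun i => some (Sum.inr (c i))) ?_ ?_ ?_ ?_
  · intro i j h
    rw [key _ _ (by simpa using hc i j h)]
    simp [crownPlusIsolated, hc i j h]
  · intro i j h
    rw [key _ _ (by simpa using hc i j h)]
    simp [crownPlusIsolated, hc i j h]
  · intro i
    rw [key _ _ (by simp)]
    simp [crownPlusIsolated]
  · intro i j h
    rw [← not_or, key _ _ (by simp)]
    simp [crownPlusIsolated, hc i j h]
end

section
/- Every simple graph whose vertex set can be partitioned into a clique A and a clique {u, v} of size 2 (with arbitrary edges between A and {u, v}) is word-representable. In other words, every co-bipartite graph in which one of the two cliques of the partition has exactly 2 vertices is word-representable. -/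
lemma filt_nil {V : Type*} [DecidableEq V] (L : List V) (x y : V) (hx : x ∉ L) (hy : y ∉ L) :
    (L.filter fun z => decide (z = x ∨ z = y)) = [] := by
  rw [List.filter_eq_nil_iff]
  intro a ha
  simp only [decide_eq_true_eq]
  rintro (rfl | rfl) <;> contradiction

lemma filt_left {V : Type*} [DecidableEq V] (L : List V) (x y : V) (hL : L.Nodup)
    (hx : x ∈ L) (hy : y ∉ L) :
    (L.filter fun z => decide (z = x ∨ z = y)) = [x] := by
  induction L with
  | nil => simp at hx
  | cons a t ih =>
    rw [List.nodup_cons] at hL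
    simp only [List.mem_cons, not_or] at hx hy
    by_cases h : a = x
    · subst h
      rw [List.filter_cons_of_pos (by simp), filt_nil t _ _ hL.1 hy.2]
    · rw [List.filter_cons_of_neg (by simp [h, Ne.symm hy.1])]
      exact ih hL.2 (hx.resolve_left (Ne.symm h)) hy.2

lemma filt_right {V : Type*} [DecidableEq V] (L : List V) (x y : V) (hL : L.Nodup)
    (hx : x ∉ L) (hy : y ∈ L) :
    (L.filter fun z => decide (z = x ∨ z = y)) = [y] := by
  have := filt_left L y x hL hy hx
  simpa only [or_comm] using this

lemma filt_both {V : Type*} [DecidableEq V] (L : List V) (x y : V) (hL : L.Nodup) (hxy : x ≠ y)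
    (hx : x ∈ L) (hy : y ∈ L) :
    (L.filter fun z => decide (z = x ∨ z = y)) = [x, y] ∨
    (L.filter fun z => decide (z = x ∨ z = y)) = [y, x] := by
  induction L with
  | nil => simp at hx
  | cons a t ih =>
    rw [List.nodup_cons] at hL
    simp only [List.mem_cons] at hx hy
    by_cases h : a = x
    · subst h
      left
      rw [List.filter_cons_of_pos (by simp),
        filt_right t _ _ hL.2 hL.1 (hy.resolve_left (Ne.symm hxy))]
    · by_cases h' : a = y
      · subst h'
        right
        rw [List.filter_cons_of_pos (by simp),
          filt_left t _ _ hL.2 (hx.resolve_left hxy) hL.1]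
      · rw [List.filter_cons_of_neg (by simp [h, h'])]
        exact ih hL.2 (hx.resolve_left (Ne.symm h)) (hy.resolve_left (Ne.symm h'))

set_option linter.unusedSimpArgs false
set_option maxHeartbeats 2000000 in
/-- Every co-bipartite graph whose vertex set is partitioned into a clique `A` and a
clique `{u, v}` of size 2 is word-representable. -/
theorem cobipartite_clique_two_wordRepresentable
    {V : Type*} [Fintype V] [DecidableEq V] (G : SimpleGraph V)
    (A : Set V) (u v : V) (huv : u ≠ v)
    (hpart : ∀ x : V, x ∈ A ↔ x ≠ u ∧ x ≠ v)
    (hA : G.IsClique A) (hAdj : G.Adj u v) :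
    WordRepresentable G := by
  classical
  have key : ∀ P : V → Prop, ∃ L : List V, L.Nodup ∧ ∀ x, x ∈ L ↔ P x := fun P =>
    ⟨(Finset.univ.filter P).toList, Finset.nodup_toList _, by simp⟩
  obtain ⟨W, nW, hW⟩ := key fun x => x ≠ u ∧ x ≠ v ∧ ¬ G.Adj u x ∧ G.Adj v x
  obtain ⟨N, nN, hN⟩ := key fun x => x ≠ u ∧ x ≠ v ∧ ¬ G.Adj u x ∧ ¬ G.Adj v x
  obtain ⟨U, nU, hU⟩ := key fun x => x ≠ u ∧ x ≠ v ∧ G.Adj u x ∧ ¬ G.Adj v x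
  obtain ⟨B, nB, hB⟩ := key fun x => x ≠ u ∧ x ≠ v ∧ G.Adj u x ∧ G.Adj v x
  have hvu := huv.symm
  let w := [u] ++ W ++ [v] ++ N ++ U ++ B ++ W ++ N ++ [u] ++ U ++ [v] ++ B
  have symA : ∀ x y, Alternate w x y → Alternate w y x := by
    intro x y h
    unfold Alternate at *
    simpa only [or_comm] using h
  have huv' : Alternate w u v := by
    simp [w, Alternate, List.Chain', -Bool.decide_or, filt_nil, hW, hN, hU, hB, huv, hvu]
  have hu : ∀ x, x ≠ u → x ≠ v → (Alternate w u x ↔ G.Adj u x) := by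
    intro x h1 h2
    have h1' := h1.symm
    have h2' := h2.symm
    by_cases a : G.Adj u x <;> by_cases b : G.Adj v x <;>
    simp [w, Alternate, List.Chain', -Bool.decide_or, List.filter_cons, filt_nil, filt_right, nW, nN, nU, nB,
      hW, hN, hU, hB, huv, hvu, h1, h2, h1', h2', a, b]
  have hv : ∀ x, x ≠ u → x ≠ v → (Alternate w v x ↔ G.Adj v x) := by
    intro x h1 h2
    have h1' := h1.symm
    have h2' := h2.symm
    by_cases a : G.Adj u x <;> by_cases b : G.Adj v x <;>
    simp [w, Alternate, List.Chain', -Bool.decide_or, List.filter_cons, filt_nil, filt_right, nW, nN, nU, nB,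
      hW, hN, hU, hB, huv, hvu, h1, h2, h1', h2', a, b]
  have hAA : ∀ x y, x ≠ y → x ≠ u → x ≠ v → y ≠ u → y ≠ v → Alternate w x y := by
    intro x y hxy h1 h2 h3 h4
    have hyx := hxy.symm
    have h1' := h1.symm
    have h2' := h2.symm
    have h3' := h3.symm
    have h4' := h4.symm
    have bW := filt_both W x y nW hxy
    have bN := filt_both N x y nN hxy
    have bU := filt_both U x y nU hxy
    have bB := filt_both B x y nB hxy
    simp only [hW, hN, hU, hB] at bW bN bU bB
    by_cases a : G.Adj u x <;> by_cases b : G.Adj v x <;>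
    by_cases c : G.Adj u y <;> by_cases d : G.Adj v y <;>
    simp only [a, b, c, d, h1, h2, h3, h4, ne_eq, not_true_eq_false, not_false_eq_true, and_true,
      and_false, true_and, false_and, forall_true_left, false_imp_iff, imp_true_iff,
      true_imp_iff] at bW bN bU bB <;>
    first
    | (simp [w, Alternate, List.Chain', -Bool.decide_or, List.filter_cons, filt_nil, filt_left, filt_right, nW, nN, nU, nB,
      hW, hN, hU, hB, hxy, hyx, h1, h2, h3, h4, h1', h2', h3', h4', a, b, c, d]; done)
    | (rcases bW with e | e <;> simp [w, Alternate, List.Chain', -Bool.decide_or, List.filter_cons, e, filt_nil,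
      hW, hN, hU, hB, hxy, hyx, h1, h2, h3, h4, h1', h2', h3', h4', a, b, c, d]; done)
    | (rcases bN with e | e <;> simp [w, Alternate, List.Chain', -Bool.decide_or, List.filter_cons, e, filt_nil,
      hW, hN, hU, hB, hxy, hyx, h1, h2, h3, h4, h1', h2', h3', h4', a, b, c, d]; done)
    | (rcases bU with e | e <;> simp [w, Alternate, List.Chain', -Bool.decide_or, List.filter_cons, e, filt_nil,
      hW, hN, hU, hB, hxy, hyx, h1, h2, h3, h4, h1', h2', h3', h4', a, b, c, d]; done)
    | (rcases bB with e | e <;> simp [w, Alternate, List.Chain', -Bool.decide_or, List.filter_cons, e, filt_nil,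
      hW, hN, hU, hB, hxy, hyx, h1, h2, h3, h4, h1', h2', h3', h4', a, b, c, d]; done)
  refine ⟨w, ?_, ?_⟩
  · intro x
    simp only [w, List.mem_append, List.mem_singleton, hW, hN, hU, hB]
    by_cases h1 : x = u
    · simp [h1]
    by_cases h2 : x = v
    · simp [h2]
    by_cases a : G.Adj u x <;> by_cases b : G.Adj v x <;> simp [h1, h2, a, b]
  · intro x y hxy
    have sc : ∀ a b, (Alternate w a b ↔ G.Adj a b) → (Alternate w b a ↔ G.Adj b a) := by
      intro a b h
      rw [G.adj_comm b a, ← h]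
      exact ⟨symA _ _, symA _ _⟩
    have huv2 : Alternate w u v ↔ G.Adj u v := by simp [huv', hAdj]
    by_cases h1 : x = u
    · subst h1
      by_cases h2 : y = v
      · subst h2; exact huv2
      · exact hu y hxy.symm h2
    by_cases h2 : x = v
    · subst h2
      by_cases h3 : y = u
      · subst h3; exact sc _ _ huv2
      · exact hv y h3 hxy.symm
    by_cases h3 : y = u
    · subst h3; exact sc _ _ (hu x h1 h2)
    by_cases h4 : y = v
    · subst h4; exact sc _ _ (hv x h1 h2)
    exact iff_of_true (hAA x y hxy h1 h2 h3 h4)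
      (hA ((hpart x).2 ⟨h1, h2⟩) ((hpart y).2 ⟨h3, h4⟩) hxy)
end

section
/- Let G be a simple graph whose vertex set is partitioned into a clique A and a clique {a, b, c} of size 3, with arbitrary edges between A and {a, b, c}. If no vertex of A is adjacent to all three of a, b, c, and every vertex of A is adjacent to at least one of a, b, c, then G is word-representable. -/
/-- The template word on nine block letters: `0,1,2` stand for `a,b,c`; `3,4,5` for the blocks of
vertices adjacent to exactly `a`, `b`, `c`; `6,7,8` for those adjacent to exactly `ab`, `ac`, `bc`. -/
def tmpl : List (Fin 9) :=
  [8, 0, 5, 7, 3, 1, 6, 4, 2, 8, 5, 0, 7, 1, 2, 3, 6, 0, 4, 8, 1]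

lemma block_filter_pair {V : Type*} [DecidableEq V] (l : List V) (hl : l.Nodup) (x y : V)
    (hxy : x ≠ y) (hx : x ∈ l) (hy : y ∈ l) :
    ∃ p q : V, p ≠ q ∧ (l.filter fun z => decide (z = x ∨ z = y)) = [p, q] := by
  have hp : (l.filter fun z => decide (z = x ∨ z = y)).Perm [x, y] := by
    rw [List.perm_ext_iff_of_nodup (hl.filter _) (by simp [hxy])]
    intro z
    simp only [List.mem_filter, decide_eq_true_eq, List.mem_cons, List.not_mem_nil, or_false]
    constructor
    · exact fun h => h.2
    · rintro (rfl | rfl) <;> simp [*]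
  obtain ⟨p, q, h⟩ := List.length_eq_two.1 hp.length_eq
  refine ⟨p, q, ?_, h⟩
  have := hl.filter (fun z => decide (z = x ∨ z = y))
  rw [h] at this
  simpa using this

lemma block_filter_single {V : Type*} [DecidableEq V] (l : List V) (hl : l.Nodup) (x y : V)
    (hx : x ∈ l) (hy : y ∉ l) :
    (l.filter fun z => decide (z = x ∨ z = y)) = [x] := by
  rw [← List.perm_singleton, List.perm_ext_iff_of_nodup (hl.filter _) (by simp)]
  intro z
  simp only [List.mem_filter, decide_eq_true_eq, List.mem_cons, List.not_mem_nil, or_false]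
  constructor
  · rintro ⟨h, rfl | rfl⟩
    · rfl
    · exact absurd h hy
  · rintro rfl; simp [hx]

lemma block_filter_none {V : Type*} [DecidableEq V] (l : List V) (x y : V)
    (hx : x ∉ l) (hy : y ∉ l) :
    (l.filter fun z => decide (z = x ∨ z = y)) = [] := by
  rw [List.filter_eq_nil_iff]
  intro z hz
  simp only [decide_eq_true_eq]
  rintro (rfl | rfl) <;> contradiction

lemma alternate_same {V : Type*} [DecidableEq V] (w : List (Fin 9)) (L : Fin 9 → List V)
    (ty : V → Fin 9) (hL : ∀ i, (L i).Nodup) (hm : ∀ i v, v ∈ L i ↔ ty v = i)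
    (x y : V) (hxy : x ≠ y) (ht : ty x = ty y) : Alternate (w.flatMap L) x y := by
  obtain ⟨p, q, hpq, h⟩ := block_filter_pair (L (ty x)) (hL _) x y hxy
    ((hm _ _).2 rfl) ((hm _ _).2 ht.symm)
  have key : ((w.flatMap L).filter fun z => decide (z = x ∨ z = y)).IsChain (· ≠ ·) ∧
      ∀ z ∈ ((w.flatMap L).filter fun z => decide (z = x ∨ z = y)).head?, z = p := by
    induction w with
    | nil => simp
    | cons i w ih =>
      rw [List.flatMap_cons, List.filter_append]
      by_cases hi : i = ty x
      · subst hi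
        rw [h]
        refine ⟨?_, by simp⟩
        simp only [List.cons_append, List.nil_append, List.isChain_cons]
        refine ⟨by simpa using hpq, ?_, ih.1⟩
        intro z hz
        rw [ih.2 z hz]
        exact hpq.symm
      · rw [block_filter_none (L i) x y (by rw [hm]; exact fun h => hi h.symm)
          (by rw [hm, ← ht]; exact fun h => hi h.symm)]
        simpa using ih
  exact key.1

lemma alternate_diff {V : Type*} [DecidableEq V] (w : List (Fin 9)) (L : Fin 9 → List V)
    (ty : V → Fin 9) (hL : ∀ i, (L i).Nodup) (hm : ∀ i v, v ∈ L i ↔ ty v = i)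
    (x y : V) (ht : ty x ≠ ty y) : Alternate (w.flatMap L) x y ↔ Alternate w (ty x) (ty y) := by
  have key : (((w.flatMap L).filter fun z => decide (z = x ∨ z = y)).map ty) =
      (w.filter fun z => decide (z = ty x ∨ z = ty y)) := by
    induction w with
    | nil => simp
    | cons i w ih =>
      rw [List.flatMap_cons, List.filter_append, List.map_append, ih, List.filter_cons]
      by_cases hi : i = ty x
      · subst hi
        rw [block_filter_single (L (ty x)) (hL _) x y ((hm _ _).2 rfl)
          (by rw [hm]; exact ht.symm)]
        simp
      · by_cases hj : i = ty y
        · subst hj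
          have := block_filter_single (L (ty y)) (hL _) y x ((hm _ _).2 rfl)
            (by rw [hm]; exact ht)
          simp only [or_comm (b := _ = x)] at this
          rw [this]
          simp
        · rw [block_filter_none (L i) x y (by rw [hm]; exact fun h => hi h.symm)
            (by rw [hm]; exact fun h => hj h.symm)]
          simp [hi, hj]
  unfold Alternate
  change List.IsChain _ _ ↔ List.IsChain _ _
  rw [← key, List.isChain_map]
  have hmem : ∀ z ∈ ((w.flatMap L).filter fun z => decide (z = x ∨ z = y)), z = x ∨ z = y := by
    intro z hz
    simpa using (List.mem_filter.1 hz).2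
  generalize ((w.flatMap L).filter fun z => decide (z = x ∨ z = y)) = l at hmem
  clear key
  induction l with
  | nil => simp
  | cons u l ih =>
    rw [List.isChain_cons, List.isChain_cons]
    refine and_congr (forall_congr' fun z => forall_congr' fun hz => ?_)
      (ih fun z hz => hmem z (List.mem_cons_of_mem _ hz))
    have h1 := hmem u List.mem_cons_self
    have h2 := hmem z (List.mem_cons_of_mem _ (List.mem_of_mem_head? hz))
    grind

/-- Adjacency between distinct blocks of the template. -/
def tmplAdj (i j : Fin 9) : Bool :=
  !(([(0, 4), (0, 5), (0, 8), (1, 3), (1, 5), (1, 7), (2, 3), (2, 4), (2, 6)] :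
    List (Fin 9 × Fin 9)).contains (min i j, max i j))

lemma tmpl_spec : ∀ i j : Fin 9, i ≠ j → (Alternate tmpl i j ↔ tmplAdj i j = true) := by
  unfold Alternate
  change ∀ i j : Fin 9, i ≠ j → (List.IsChain _ _ ↔ _)
  decide +kernel

lemma tmpl_mem : ∀ i : Fin 9, i ∈ tmpl := by decide

theorem cobipartite_clique_three_wordRepresentable
    {V : Type*} [Fintype V] [DecidableEq V] (G : SimpleGraph V)
    (A : Set V) (a b c : V) (hab : a ≠ b) (hac : a ≠ c) (hbc : b ≠ c)
    (hpart : ∀ x : V, x ∈ A ↔ x ≠ a ∧ x ≠ b ∧ x ≠ c)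
    (hA : G.IsClique A)
    (hab' : G.Adj a b) (hac' : G.Adj a c) (hbc' : G.Adj b c)
    (hnotAll : ∀ x ∈ A, ¬ (G.Adj x a ∧ G.Adj x b ∧ G.Adj x c))
    (hsome : ∀ x ∈ A, G.Adj x a ∨ G.Adj x b ∨ G.Adj x c) :
    WordRepresentable G := by
  classical
  let ty : V → Fin 9 := fun v =>
    if v = a then 0 else if v = b then 1 else if v = c then 2
    else if G.Adj v a then (if G.Adj v b then 6 else if G.Adj v c then 7 else 3)
    else if G.Adj v b then (if G.Adj v c then 8 else 4) else 5
  let L : Fin 9 → List V := fun i => (Finset.univ.filter fun v => ty v = i).toList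
  have hL : ∀ i, (L i).Nodup := fun i => Finset.nodup_toList _
  have hm : ∀ i v, v ∈ L i ↔ ty v = i := fun i v => by simp [L]
  have hcase : ∀ v, (v = a ∧ ty v = 0) ∨ (v = b ∧ ty v = 1) ∨ (v = c ∧ ty v = 2) ∨
      (v ∈ A ∧ ((ty v = 3 ∧ G.Adj v a ∧ ¬ G.Adj v b ∧ ¬ G.Adj v c) ∨
        (ty v = 4 ∧ ¬ G.Adj v a ∧ G.Adj v b ∧ ¬ G.Adj v c) ∨
        (ty v = 5 ∧ ¬ G.Adj v a ∧ ¬ G.Adj v b ∧ G.Adj v c) ∨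
        (ty v = 6 ∧ G.Adj v a ∧ G.Adj v b ∧ ¬ G.Adj v c) ∨
        (ty v = 7 ∧ G.Adj v a ∧ ¬ G.Adj v b ∧ G.Adj v c) ∨
        (ty v = 8 ∧ ¬ G.Adj v a ∧ G.Adj v b ∧ G.Adj v c))) := by
    intro v
    have h1 := hpart v
    have h2 := hnotAll v
    have h3 := hsome v
    simp only [ty]
    clear_value L
    clear hm hL
    by_cases ea : v = a
    · simp [ea]
    by_cases eb : v = b
    · simp [eb, hab.symm]
    by_cases ec : v = c
    · simp [ec, hac.symm, hbc.symm]
    have hv : v ∈ A := h1.2 ⟨ea, eb, ec⟩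
    have h2 := h2 hv
    have h3 := h3 hv
    by_cases fa : G.Adj v a <;> by_cases fb : G.Adj v b <;> by_cases fc : G.Adj v c <;>
      simp_all
  refine ⟨tmpl.flatMap L, ?_, ?_⟩
  · intro v
    exact List.mem_flatMap.2 ⟨ty v, tmpl_mem _, (hm _ _).2 rfl⟩
  · intro x y hxy
    have hAA : x ∈ A → y ∈ A → G.Adj x y := fun hx hy => hA hx hy hxy
    have hx := hcase x
    have hy := hcase y
    by_cases ht : ty x = ty y
    · refine iff_of_true (alternate_same _ L ty hL hm x y hxy ht) ?_
      clear_value ty L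
      rcases hx with ⟨rfl, h⟩ | ⟨rfl, h⟩ | ⟨rfl, h⟩ | ⟨h0, h⟩ <;>
      rcases hy with ⟨rfl, h'⟩ | ⟨rfl, h'⟩ | ⟨rfl, h'⟩ | ⟨h0', h'⟩ <;>
      first
      | exact absurd rfl hxy
      | exact hAA h0 h0'
      | grind
    · rw [alternate_diff _ L ty hL hm x y ht, tmpl_spec _ _ ht]
      clear_value ty L
      clear hcase hnotAll hsome hpart hm hL
      have hba' := hab'.symm
      have hca' := hac'.symm
      have hcb' := hbc'.symm
      rcases hx with ⟨rfl, h⟩ | ⟨rfl, h⟩ | ⟨rfl, h⟩ | ⟨h0, h⟩ <;>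
      rcases hy with ⟨rfl, h'⟩ | ⟨rfl, h'⟩ | ⟨rfl, h'⟩ | ⟨h0', h'⟩ <;>
      first
      | exact absurd rfl hxy
      | (rw [h, h']; refine iff_of_true (by decide) ?_; assumption)
      | (rw [G.adj_comm, h]
         rcases h' with ⟨h', h1, h2, h3⟩ | ⟨h', h1, h2, h3⟩ | ⟨h', h1, h2, h3⟩ |
          ⟨h', h1, h2, h3⟩ | ⟨h', h1, h2, h3⟩ | ⟨h', h1, h2, h3⟩ <;> rw [h'] <;>
          simp only [h1, h2, h3] <;> decide)
      | (rw [h']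
         rcases h with ⟨h, h1, h2, h3⟩ | ⟨h, h1, h2, h3⟩ | ⟨h, h1, h2, h3⟩ |
          ⟨h, h1, h2, h3⟩ | ⟨h, h1, h2, h3⟩ | ⟨h, h1, h2, h3⟩ <;> rw [h] <;>
          simp only [h1, h2, h3] <;> decide)
      | (refine iff_of_true ?_ (hAA h0 h0')
         have e : ∀ i j : Fin 9, 3 ≤ i → 3 ≤ j → tmplAdj i j = true := by decide
         refine e _ _ ?_ ?_
         · rcases h with h | h | h | h | h | h <;> rw [h.1] <;> decide
         · rcases h' with h | h | h | h | h | h <;> rw [h.1] <;> decide)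
end

section
/- Let G be a simple graph whose vertex set is partitioned into two cliques A and B, and let D be a semi-transitive orientation of G. Then every vertex of A is of type A, of type B, or of type C with respect to B, and symmetrically every vertex of B is of type A, of type B, or of type C with respect to A. -/
/-- `dir` is an orientation of the simple graph `G`: it assigns to each edge exactly one
of its two directions. -/
def IsOrientation {V : Type*} (G : SimpleGraph V) (dir : V → V → Prop) : Prop :=
  (∀ x y : V, dir x y → G.Adj x y) ∧
  (∀ x y : V, G.Adj x y → dir x y ∨ dir y x) ∧
  (∀ x y : V, dir x y → ¬ dir y x)

/-- An orientation is acyclic if it has no directed cycle. -/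
def OrientAcyclic {V : Type*} (dir : V → V → Prop) : Prop :=
  ∀ v : V, ¬ Relation.TransGen dir v v

/-- An orientation is shortcut-free if for every directed path
`f 0 → f 1 → ⋯ → f k` (`k ≥ 2`) such that `f 0 → f k` is an oriented edge,
`f i → f j` is an oriented edge for all `i < j ≤ k`. -/
def ShortcutFree {V : Type*} (dir : V → V → Prop) : Prop :=
  ∀ (k : ℕ) (f : ℕ → V), 2 ≤ k → (∀ i, i < k → dir (f i) (f (i + 1))) →
    dir (f 0) (f k) → ∀ i j, i < j → j ≤ k → dir (f i) (f j)

/-- An orientation is semi-transitive if it is acyclic and shortcut-free. -/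
def SemiTransitive {V : Type*} (dir : V → V → Prop) : Prop :=
  OrientAcyclic dir ∧ ShortcutFree dir

/-- `S` is an interval of the clique `B` with respect to the order given by `dir`:
any vertex of `B` lying (in the direction `dir`) between two vertices of `S` is in `S`. -/
def IsIntervalIn {V : Type*} (dir : V → V → Prop) (B S : Set V) : Prop :=
  S ⊆ B ∧ ∀ u v w : V, u ∈ S → v ∈ B → w ∈ S → dir u v → dir v w → v ∈ S

/-- `S` is an initial segment of the clique `B` with respect to the order given by `dir`. -/
def IsInitialSegIn {V : Type*} (dir : V → V → Prop) (B S : Set V) : Prop :=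
  S ⊆ B ∧ ∀ u v : V, u ∈ B → v ∈ S → dir u v → u ∈ S

/-- `S` is a final segment of the clique `B` with respect to the order given by `dir`. -/
def IsFinalSegIn {V : Type*} (dir : V → V → Prop) (B S : Set V) : Prop :=
  S ⊆ B ∧ ∀ u v : V, u ∈ S → v ∈ B → dir u v → v ∈ S

/-- `x` is of type A with respect to the clique `B`: its neighbourhood in `B` is an
interval of `B` and every edge between `x` and `B` is oriented from `x` into `B`. -/
def TypeA {V : Type*} (G : SimpleGraph V) (dir : V → V → Prop) (B : Set V) (x : V) : Prop :=
  IsIntervalIn dir B {b ∈ B | G.Adj x b} ∧ ∀ b ∈ B, G.Adj x b → dir x b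

/-- `x` is of type B with respect to the clique `B`: its neighbourhood in `B` is an
interval of `B` and every edge between `x` and `B` is oriented from `B` into `x`. -/
def TypeB {V : Type*} (G : SimpleGraph V) (dir : V → V → Prop) (B : Set V) (x : V) : Prop :=
  IsIntervalIn dir B {b ∈ B | G.Adj x b} ∧ ∀ b ∈ B, G.Adj x b → dir b x

/-- `x` is of type C with respect to the clique `B`: its neighbourhood in `B` is the
disjoint union of a nonempty initial segment `S` of `B`, whose edges are oriented into
`x`, and a nonempty final segment `T` of `B`, whose edges are oriented out of `x`. -/
def TypeC {V : Type*} (G : SimpleGraph V) (dir : V → V → Prop) (B : Set V) (x : V) : Prop :=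
  ∃ S T : Set V, {b ∈ B | G.Adj x b} = S ∪ T ∧ S.Nonempty ∧ T.Nonempty ∧
    Disjoint S T ∧ IsInitialSegIn dir B S ∧ IsFinalSegIn dir B T ∧
    (∀ b ∈ S, dir b x) ∧ (∀ b ∈ T, dir x b)

theorem path4_aux {V : Type*} {dir : V → V → Prop} (h : ShortcutFree dir) {a b c d : V}
    (hab : dir a b) (hbc : dir b c) (hcd : dir c d) (had : dir a d) :
    dir a c ∧ dir b d := by
  let f : ℕ → V := fun n => match n with
    | 0 => a
    | 1 => b
    | 2 => c
    | _ => d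
  have key := h 3 f (by norm_num) (by
    intro i hi
    interval_cases i
    · exact hab
    · exact hbc
    · exact hcd) had
  exact ⟨key 0 2 (by norm_num) (by norm_num), key 1 3 (by norm_num) (by norm_num)⟩

theorem types_aux {V : Type*} (G : SimpleGraph V) (B : Set V) (hB : G.IsClique B)
    (dir : V → V → Prop) (hor : IsOrientation G dir) (hst : SemiTransitive dir) (x : V) :
    TypeA G dir B x ∨ TypeB G dir B x ∨ TypeC G dir B x := by
  obtain ⟨h1, h2, h3⟩ := hor
  obtain ⟨hac, hsf⟩ := hst
  have hord : ∀ u v, u ∈ B → v ∈ B → Relation.TransGen dir u v → dir u v := by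
    intro u v hu hv huv
    have hne : u ≠ v := by
      rintro rfl
      exact hac _ huv
    rcases h2 u v (hB hu hv hne) with h | h
    · exact h
    · exact (hac _ (huv.tail h)).elim
  by_cases hT : ∃ t ∈ B, dir x t
  · by_cases hS : ∃ s ∈ B, dir s x
    · right; right
      obtain ⟨t, htB, ht⟩ := hT
      obtain ⟨s, hsB, hs⟩ := hS
      refine ⟨{b ∈ B | dir b x}, {b ∈ B | dir x b}, ?_, ⟨s, hsB, hs⟩, ⟨t, htB, ht⟩, ?_,
        ⟨fun b hb => hb.1, ?_⟩, ⟨fun b hb => hb.1, ?_⟩, fun b hb => hb.2, fun b hb => hb.2⟩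
      · ext b
        constructor
        · rintro ⟨hb, hadj⟩
          rcases h2 _ _ hadj with h | h
          · exact Or.inr ⟨hb, h⟩
          · exact Or.inl ⟨hb, h⟩
        · rintro (⟨hb, h⟩ | ⟨hb, h⟩)
          · exact ⟨hb, (h1 _ _ h).symm⟩
          · exact ⟨hb, h1 _ _ h⟩
      · rw [Set.disjoint_left]
        rintro b ⟨_, h⟩ ⟨_, h'⟩
        exact h3 _ _ h h'
      · rintro u v hu ⟨_, hv⟩ huv
        exact ⟨hu, (path4_aux hsf huv hv ht
          (hord u t hu htB (((Relation.TransGen.single huv).tail hv).tail ht))).1⟩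
      · rintro u v ⟨_, hu⟩ hv huv
        exact ⟨hv, (path4_aux hsf hs hu huv
          (hord s v hsB hv (((Relation.TransGen.single hs).tail hu).tail huv))).2⟩
    · left
      have hall : ∀ b ∈ B, G.Adj x b → dir x b := fun b hb hadj =>
        (h2 _ _ hadj).resolve_right fun h => hS ⟨b, hb, h⟩
      refine ⟨⟨fun b hb => hb.1, ?_⟩, hall⟩
      rintro u v w ⟨hu, hu'⟩ hv ⟨hw, hw'⟩ huv hvw
      exact ⟨hv, h1 _ _ (path4_aux hsf (hall u hu hu') huv hvw (hall w hw hw')).1⟩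
  · right; left
    have hall : ∀ b ∈ B, G.Adj x b → dir b x := fun b hb hadj =>
      (h2 _ _ hadj).resolve_left fun h => hT ⟨b, hb, h⟩
    refine ⟨⟨fun b hb => hb.1, ?_⟩, hall⟩
    rintro u v w ⟨hu, hu'⟩ hv ⟨hw, hw'⟩ huv hvw
    exact ⟨hv, (h1 _ _ (path4_aux hsf huv hvw (hall w hw hw') (hall u hu hu')).2).symm⟩

/-- Under any semi-transitive orientation of a co-bipartite graph with clique partition
`A ∪ B`, every vertex of `A` is of type A, type B or type C with respect to `B`, and
every vertex of `B` is of type A, type B or type C with respect to `A`. -/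
theorem cobipartite_semiTransitive_vertex_types
    {V : Type*} (G : SimpleGraph V) (A B : Set V)
    (hcover : A ∪ B = Set.univ) (hdisj : Disjoint A B)
    (hA : G.IsClique A) (hB : G.IsClique B)
    (dir : V → V → Prop) (hor : IsOrientation G dir) (hst : SemiTransitive dir) :
    (∀ x ∈ A, TypeA G dir B x ∨ TypeB G dir B x ∨ TypeC G dir B x) ∧
    (∀ x ∈ B, TypeA G dir A x ∨ TypeB G dir A x ∨ TypeC G dir A x) := by
  exact ⟨fun x _ => types_aux G B hB dir hor hst x, fun x _ => types_aux G A hA dir hor hst x⟩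
end

section
/- Let D be a semi-transitive orientation of a simple graph G whose vertex set is partitioned into two cliques A and B. Let x ∈ A and s, t ∈ B, and suppose the oriented edges s → t, s → x, and x → t all exist in D. Then for every y ∈ A with the edge between x and y oriented y → x: (a) there is no edge oriented t → y, and (b) if there is an edge oriented s → y, then y is adjacent to t. -/
/-- Let `D` (= `dir`) be a semi-transitive orientation of a graph `G` whose vertex set is
partitioned into two cliques `A` and `B`. Let `x ∈ A` and `s, t ∈ B` with oriented edges
`s → t`, `s → x` and `x → t`. Then for every `y ∈ A` with the edge between `x` and `y`
oriented `y → x`: (a) there is no edge oriented `t → y`, and (b) if there is an edge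
oriented `s → y`, then `y` is adjacent to `t`. -/
theorem cobipartite_typeC_predecessor_restriction
    {V : Type*} (G : SimpleGraph V) (A B : Set V)
    (hcover : A ∪ B = Set.univ) (hdisj : Disjoint A B)
    (hA : G.IsClique A) (hB : G.IsClique B)
    (dir : V → V → Prop) (hor : IsOrientation G dir) (hst : SemiTransitive dir)
    (x s t : V) (hx : x ∈ A) (hs : s ∈ B) (ht : t ∈ B)
    (hst' : dir s t) (hsx : dir s x) (hxt : dir x t) :
    ∀ y ∈ A, dir y x → ¬ dir t y ∧ (dir s y → G.Adj y t) := by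
  intro y _ hyx
  refine ⟨fun hty => ?_, fun hsy => ?_⟩
  · exact hst.1 t (((Relation.TransGen.single hty).tail hyx).tail hxt)
  · let f : ℕ → V := fun n =>
      match n with
      | 0 => s
      | 1 => y
      | 2 => x
      | _ => t
    have hpath : ∀ i, i < 3 → dir (f i) (f (i + 1)) := by
      intro i hi
      interval_cases i
      · exact hsy
      · exact hyx
      · exact hxt
    exact hor.1 y t (hst.2 3 f (by norm_num) hpath hst' 1 3 (by norm_num) le_rfl)
end
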